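/- Let G = (V,E) be a finite graph, w : V → ℕ node weights, k ∈ ℕ, and for each node v a monotone predicate P_v : (ℕ ≤ k)^(N(v) ∪ {v}) → Prop, meaning: if P_v holds for an assignment x and x' pointwise dominates x (x'(u) ≥ x(u) for all u in v's closed neighborhood), then P_v holds for x'. Suppose o : V → {0,…,k} satisfies P_v(o restricted to v's closed neighborhood) for all v ∈ V, and o minimizes the total weight ∑_v w(v)·o(v) among all such feasible assignments. Then for every U ⊆ V and every g : U → {0,…,k} such that P_v(g) holds for all v ∈ inner(U), we have ∑_{v ∈ inner²(U)} w(v)·o(v) ≤ ∑_{v ∈ U} w(v)·g(v). -/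

import Mathlib

/-- `inner(U) = {u ∈ U | N(u) ⊆ U}` as a Finset. -/
def innF {V : Type*} [Fintype V] [DecidableEq V] (G : SimpleGraph V) [DecidableRel G.Adj]
    (U : Finset V) : Finset V :=
  U.filter fun u => ∀ x, G.Adj u x → x ∈ U

/-!
Replace `o` by `g` on `inner²(U)` and by `max o g` on the rim `U \ inner²(U)`. A closed
neighbourhood centred in `inner(U)` lies in `U`, where the new assignment dominates `g`; one centred
outside `inner(U)` avoids `inner²(U)`, so there the new assignment dominates `o`. It is therefore
feasible, and it costs at most the cost of `o` off `inner²(U)` plus the cost of `g` on `U`.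
Comparing with the optimal cost and cancelling gives the bound.
-/

section Exchange

variable {V α M : Type*} [DecidableEq V] [LinearOrder α]

/-- The exchange of `o` for `g` inside `U`, with core `I`: it is `g` on `I`, the pointwise maximum
of `o` and `g` on `U \ I`, and `o` outside `U`. For `I = inner²(U)`, this is the assignment compared
with an optimal `o`. Values of `g` outside `U` are ignored when `I ⊆ U`. -/
def exchange (I U : Finset V) (o g : V → α) : V → α :=
  I.piecewise g (U.piecewise (o ⊔ g) o)

variable {I U : Finset V} {o g : V → α} {v : V}

theorem exchange_of_mem_core (hv : v ∈ I) : exchange I U o g v = g v :=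
  I.piecewise_eq_of_mem _ _ hv

theorem exchange_of_mem_rim (hvI : v ∉ I) (hvU : v ∈ U) :
    exchange I U o g v = max (o v) (g v) := by
  simp [exchange, hvI, hvU]

theorem exchange_of_notMem (hvI : v ∉ I) (hvU : v ∉ U) : exchange I U o g v = o v := by
  simp [exchange, hvI, hvU]

theorem le_exchange_left (hv : v ∉ I) : o v ≤ exchange I U o g v := by
  by_cases hvU : v ∈ U
  · exact (le_max_left _ _).trans_eq (exchange_of_mem_rim hv hvU).symm
  · exact (exchange_of_notMem hv hvU).ge

theorem le_exchange_right (hv : v ∈ U) : g v ≤ exchange I U o g v := by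
  by_cases hvI : v ∈ I
  · exact (exchange_of_mem_core hvI).ge
  · exact (le_max_right _ _).trans_eq (exchange_of_mem_rim hvI hv).symm

theorem exchange_mem {A : V → Set α} (hIU : I ⊆ U) (ho : ∀ v, o v ∈ A v)
    (hg : ∀ v ∈ U, g v ∈ A v) (v : V) : exchange I U o g v ∈ A v := by
  by_cases hvI : v ∈ I
  · rw [exchange_of_mem_core hvI]
    exact hg v (hIU hvI)
  by_cases hvU : v ∈ U
  · rw [exchange_of_mem_rim hvI hvU]
    exact max_rec' (· ∈ A v) (ho v) (hg v hvU)
  · rw [exchange_of_notMem hvI hvU]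
    exact ho v

variable [AddCommMonoid M] [PartialOrder M] [IsOrderedAddMonoid M]

theorem apply_max_le_add {f : α → M} {x y : α} (hx : 0 ≤ f x) (hy : 0 ≤ f y) :
    f (max x y) ≤ f x + f y :=
  max_rec' (f · ≤ f x + f y) (le_add_of_nonneg_right hy) (le_add_of_nonneg_left hx)

theorem sum_exchange_le [Fintype V] {c : V → α → M} (hIU : I ⊆ U) (ho : ∀ v, 0 ≤ c v (o v))
    (hg : ∀ v ∈ U, 0 ≤ c v (g v)) :
    ∑ v, c v (exchange I U o g v) ≤ ∑ v ∈ Iᶜ, c v (o v) + ∑ v ∈ U, c v (g v) := by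
  have pointwise (v : V) : c v (exchange I U o g v) ≤
      (if v ∈ Iᶜ then c v (o v) else 0) + (if v ∈ U then c v (g v) else 0) := by
    by_cases hvI : v ∈ I
    · simp [exchange_of_mem_core hvI, hvI, hIU hvI]
    by_cases hvU : v ∈ U
    · simpa [exchange_of_mem_rim hvI hvU, hvI, hvU] using apply_max_le_add (ho v) (hg v hvU)
    · simp [exchange_of_notMem hvI hvU, hvI, hvU]
  calc ∑ v, c v (exchange I U o g v)
      ≤ ∑ v, ((if v ∈ Iᶜ then c v (o v) else 0) + (if v ∈ U then c v (g v) else 0)) :=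
        Finset.sum_le_sum fun v _ => pointwise v
    _ = ∑ v ∈ Iᶜ, c v (o v) + ∑ v ∈ U, c v (g v) := by
        simp only [Finset.sum_add_distrib, Finset.sum_ite_mem, Finset.univ_inter]

end Exchange

section Covering

variable {V α M : Type*}

/-- The local predicates `P` of a covering problem on `G`: `P v` is preserved when an assignment
increases on the closed neighbourhood of `v`. Although `P v` takes an assignment on all of `V`, it
thereby depends only on the values on that neighbourhood. -/
def IsCovering [Preorder α] (G : SimpleGraph V) (P : V → (V → α) → Prop) : Prop :=
  ∀ v (x x' : V → α), (∀ u, (u = v ∨ G.Adj v u) → x u ≤ x' u) → P v x → P v x'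

variable [Fintype V] [DecidableEq V] {G : SimpleGraph V} [DecidableRel G.Adj] {U : Finset V}

theorem innF_subset : innF G U ⊆ U :=
  Finset.filter_subset _ _

theorem mem_of_mem_innF {u v : V} (hv : v ∈ innF G U) (hu : u = v ∨ G.Adj v u) : u ∈ U := by
  obtain ⟨hvU, hadj⟩ := Finset.mem_filter.mp hv
  rcases hu with rfl | hu
  exacts [hvU, hadj u hu]

theorem notMem_innF_of_notMem {u v : V} (hv : v ∉ U) (hu : u = v ∨ G.Adj v u) :
    u ∉ innF G U :=
  fun huU => hv (mem_of_mem_innF huU (hu.imp Eq.symm SimpleGraph.Adj.symm))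

variable [LinearOrder α] {P : V → (V → α) → Prop} {o g : V → α}

theorem IsCovering.exchange (hP : IsCovering G P) (ho : ∀ v, P v o) (hg : ∀ v ∈ innF G U, P v g)
    (v : V) : P v (exchange (innF G (innF G U)) U o g) := by
  by_cases hv : v ∈ innF G U
  · exact hP v g _ (fun u hu => le_exchange_right (mem_of_mem_innF hv hu)) (hg v hv)
  · exact hP v o _ (fun u hu => le_exchange_left (notMem_innF_of_notMem hv hu)) (ho v)

theorem stmt3_general [AddCommMonoid M] [PartialOrder M] [IsOrderedCancelAddMonoid M]
    (hP : IsCovering G P) {A : V → Set α} {c : V → α → M} (hc : ∀ v, ∀ x ∈ A v, 0 ≤ c v x)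
    (hoA : ∀ v, o v ∈ A v) (ho : ∀ v, P v o)
    (hopt : ∀ o' : V → α, (∀ v, o' v ∈ A v) → (∀ v, P v o') → ∑ v, c v (o v) ≤ ∑ v, c v (o' v))
    (hgA : ∀ v ∈ U, g v ∈ A v) (hg : ∀ v ∈ innF G U, P v g) :
    ∑ v ∈ innF G (innF G U), c v (o v) ≤ ∑ v ∈ U, c v (g v) := by
  set I := innF G (innF G U)
  have hIU : I ⊆ U := innF_subset.trans innF_subset
  refine le_of_add_le_add_left (a := ∑ v ∈ Iᶜ, c v (o v)) ?_
  calc ∑ v ∈ Iᶜ, c v (o v) + ∑ v ∈ I, c v (o v)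
      = ∑ v, c v (o v) := Finset.sum_compl_add_sum I _
    _ ≤ ∑ v, c v (exchange I U o g v) :=
        hopt _ (exchange_mem hIU hoA hgA) (hP.exchange ho hg)
    _ ≤ ∑ v ∈ Iᶜ, c v (o v) + ∑ v ∈ U, c v (g v) :=
        sum_exchange_le hIU (fun v => hc v _ (hoA v)) fun v hv => hc v _ (hgA v hv)

end Covering

/-- Lemma 4.1 (covering MinDGPs): if `o` is a minimum-weight assignment feasible for the
monotone-upward local predicates `P`, then for any `U` and any `g` respecting the
predicates at `inner(U)`, `∑_{v ∈ inner²(U)} w(v)·o(v) ≤ ∑_{v ∈ U} w(v)·g(v)`. -/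
theorem stmt3 {V : Type*} [Fintype V] [DecidableEq V] (G : SimpleGraph V)
    [DecidableRel G.Adj] (w : V → ℕ) (k : ℕ) (P : V → (V → ℕ) → Prop)
    (hmono : ∀ v (x x' : V → ℕ),
      (∀ u, (u = v ∨ G.Adj v u) → x u ≤ x' u) → P v x → P v x')
    (o : V → ℕ) (hok : ∀ v, o v ≤ k) (hfeas : ∀ v, P v o)
    (hopt : ∀ o' : V → ℕ, (∀ v, o' v ≤ k) → (∀ v, P v o') →
      ∑ v, w v * o v ≤ ∑ v, w v * o' v)
    (U : Finset V) (g : V → ℕ) (hgk : ∀ v, g v ≤ k)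
    (hg : ∀ v ∈ innF G U, P v g) :
    ∑ v ∈ innF G (innF G U), w v * o v ≤ ∑ v ∈ U, w v * g v :=
  stmt3_general (A := fun _ => Set.Iic k) (c := fun v x => w v * x) hmono
    (fun _ _ _ => Nat.zero_le _) hok hfeas hopt (fun v _ => hgk v) hg
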